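/- (De Giorgi–Poincaré lemma.) There exists a constant γ > 0 depending only on n such that the following holds: for every y ∈ ℝⁿ, every r > 0, every continuously differentiable function u : B_r(y) → ℝ with ∫_{B_r(y)} |∇u| dx < ∞, and all real numbers k < l, one has (l−k) · |A_{k,r}| · |B_r(y) ∖ A_{l,r}| ≤ γ r^{n+1} ∫_{A_{l,r} ∖ A_{k,r}} |∇u(x)| dx, where A_{m,r} := {x ∈ B_r(y) : u(x) < m}. -/

import Mathlib

open MeasureTheory Metric Set

noncomputable section

lemma dg_one_dim (φ φ' : ℝ → ℝ) (hd : ∀ t ∈ Icc (0:ℝ) 1, HasDerivAt φ (φ' t) t)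
    (hc : ContinuousOn φ' (Icc 0 1)) (k l : ℝ) (hkl : k < l) (h0 : φ 0 < k) (h1 : l ≤ φ 1) :
    ENNReal.ofReal (l - k) ≤
      ∫⁻ t in Icc (0:ℝ) 1, ({t | k ≤ φ t ∧ φ t < l}.indicator (fun t => ‖φ' t‖ₑ)) t := by
  have hφ : ContinuousOn φ (Icc 0 1) := fun t ht => (hd t ht).continuousAt.continuousWithinAt
  have hS : IsCompact (Icc (0:ℝ) 1 ∩ φ ⁻¹' (Ici l)) :=
    isCompact_Icc.of_isClosed_subset
      (hφ.preimage_isClosed_of_isClosed isClosed_Icc isClosed_Ici) inter_subset_left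
  obtain ⟨b, ⟨hbI, hbl⟩, hbmin⟩ := hS.exists_isLeast ⟨1, by simp, h1⟩
  have hb0 : 0 ≤ b := hbI.1
  have hsub : Icc 0 b ⊆ Icc (0:ℝ) 1 := Icc_subset_Icc_right hbI.2
  have hT : IsCompact (Icc (0:ℝ) b ∩ φ ⁻¹' (Iic k)) :=
    isCompact_Icc.of_isClosed_subset
      ((hφ.mono hsub).preimage_isClosed_of_isClosed isClosed_Icc isClosed_Iic) inter_subset_left
  obtain ⟨a, ⟨haI, hak⟩, hamax⟩ := hT.exists_isGreatest ⟨0, ⟨le_rfl, hb0⟩, h0.le⟩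
  simp only [mem_preimage, mem_Ici, mem_Iic] at hbl hak
  have hab : a ≤ b := haI.2
  have hsub2 : Icc a b ⊆ Icc (0:ℝ) 1 := Icc_subset_Icc haI.1 hbI.2
  have hftc : ∫ t in a..b, φ' t = φ b - φ a := by
    apply intervalIntegral.integral_eq_sub_of_hasDerivAt
    · intro t ht
      rw [uIcc_of_le hab] at ht
      exact hd t (hsub2 ht)
    · apply ContinuousOn.intervalIntegrable
      rw [uIcc_of_le hab]
      exact hc.mono hsub2
  rw [intervalIntegral.integral_of_le hab, integral_Ioc_eq_integral_Ioo] at hftc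
  calc ENNReal.ofReal (l - k) ≤ ENNReal.ofReal (φ b - φ a) :=
        ENNReal.ofReal_le_ofReal (by linarith)
    _ ≤ ‖φ b - φ a‖ₑ := Real.ofReal_le_enorm _
    _ ≤ ∫⁻ t in Ioo a b, ‖φ' t‖ₑ := by
        rw [← hftc]; exact enorm_integral_le_lintegral_enorm _
    _ = ∫⁻ t in Ioo a b, ({t | k ≤ φ t ∧ φ t < l}.indicator (fun t => ‖φ' t‖ₑ)) t := by
        apply setLIntegral_congr_fun measurableSet_Ioo
        intro t ht
        have htm : t ∈ {t | k ≤ φ t ∧ φ t < l} := by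
          constructor
          · by_contra h
            have := hamax ⟨⟨haI.1.trans ht.1.le, ht.2.le⟩, (not_le.1 h).le⟩
            linarith [ht.1]
          · by_contra h
            have := hbmin ⟨hsub2 (Ioo_subset_Icc_self ht), not_lt.1 h⟩
            linarith [ht.2]
        simp only [indicator_of_mem htm]
    _ ≤ _ := lintegral_mono_set (Ioo_subset_Icc_self.trans hsub2)

lemma dg_change {n : ℕ} (g : EuclideanSpace ℝ (Fin n) → ENNReal) (hg : Measurable g)
    (c : ℝ) (hc : 1 / 2 ≤ c) (v : EuclideanSpace ℝ (Fin n)) :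
    ∫⁻ x, g (c • x + v) ≤ 2 ^ n * ∫⁻ x, g x := by
  have hc0 : 0 < c := by linarith
  have h1 : ∫⁻ x, g (c • x + v) =
      ∫⁻ x, g (x + v) ∂(Measure.map (fun x : EuclideanSpace ℝ (Fin n) => c • x) volume) := by
    rw [lintegral_map (by fun_prop) (by fun_prop)]
  rw [h1, Measure.map_addHaar_smul _ hc0.ne', lintegral_smul_measure,
    lintegral_add_right_eq_self, smul_eq_mul]
  gcongr
  rw [finrank_euclideanSpace_fin, abs_of_pos (by positivity), ← inv_pow,
    ENNReal.ofReal_pow (by positivity)]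
  gcongr
  rw [← ENNReal.ofReal_ofNat 2]
  apply ENNReal.ofReal_le_ofReal
  rw [inv_le_comm₀ hc0 (by norm_num)]
  linarith

lemma dg_slice {n : ℕ} (g : EuclideanSpace ℝ (Fin n) → ENNReal) (hg : Measurable g)
    (S : Set (EuclideanSpace ℝ (Fin n))) (t : ℝ) :
    ∫⁻ x in S, ∫⁻ z in S, g (x + t • (z - x)) ≤ 2 ^ n * (∫⁻ x, g x) * volume S := by
  rcases le_total (1 / 2) t with ht | ht
  · calc _ ≤ ∫⁻ x in S, 2 ^ n * (∫⁻ x, g x) := by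
          apply lintegral_mono
          intro x
          refine (setLIntegral_le_lintegral _ _).trans ?_
          refine le_trans (le_of_eq ?_) (dg_change g hg t ht (x - t • x))
          congr 1; ext z; congr 1; rw [smul_sub]; abel
      _ = _ := setLIntegral_const _ _
  · rw [lintegral_lintegral_swap (by
      apply Measurable.aemeasurable
      exact hg.comp (by fun_prop))]
    calc _ ≤ ∫⁻ x in S, 2 ^ n * (∫⁻ x, g x) := by
          apply lintegral_mono
          intro z
          refine (setLIntegral_le_lintegral _ _).trans ?_
          refine le_trans (le_of_eq ?_) (dg_change g hg (1 - t) (by linarith) (t • z))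
          congr 1; ext x; congr 1; rw [smul_sub, sub_smul, one_smul]; abel
      _ = _ := setLIntegral_const _ _

lemma dg_triple {n : ℕ} (g : EuclideanSpace ℝ (Fin n) → ENNReal) (hg : Measurable g)
    (S : Set (EuclideanSpace ℝ (Fin n))) :
    ∫⁻ x in S, ∫⁻ z in S, ∫⁻ t in Icc (0:ℝ) 1, g (x + t • (z - x)) ≤
      2 ^ n * (∫⁻ x, g x) * volume S := by
  have e1 : ∀ x, ∫⁻ z in S, ∫⁻ t in Icc (0:ℝ) 1, g (x + t • (z - x)) =
      ∫⁻ t in Icc (0:ℝ) 1, ∫⁻ z in S, g (x + t • (z - x)) := by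
    intro x
    apply lintegral_lintegral_swap
    apply Measurable.aemeasurable
    exact hg.comp (by fun_prop)
  simp_rw [e1]
  rw [lintegral_lintegral_swap]
  · calc _ ≤ ∫⁻ t in Icc (0:ℝ) 1, 2 ^ n * (∫⁻ x, g x) * volume S :=
          lintegral_mono fun t => dg_slice g hg S t
      _ = _ := by rw [setLIntegral_const]; simp
  · apply Measurable.aemeasurable
    have : Measurable (fun p : (EuclideanSpace ℝ (Fin n) × ℝ) × EuclideanSpace ℝ (Fin n) =>
        g (p.1.1 + p.1.2 • (p.2 - p.1.1))) := hg.comp (by fun_prop)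
    exact this.lintegral_prod_right'

lemma dg_line {n : ℕ} (y : EuclideanSpace ℝ (Fin n)) (r : ℝ)
    (u : EuclideanSpace ℝ (Fin n) → ℝ) (hu : ContDiffOn ℝ 1 u (ball y r))
    (k l : ℝ) (hkl : k < l) (x z : EuclideanSpace ℝ (Fin n)) (hx : x ∈ ball y r)
    (hz : z ∈ ball y r) (hxk : u x < k) (hzl : l ≤ u z) :
    ENNReal.ofReal (l - k) ≤ ENNReal.ofReal (2 * r) * ∫⁻ t in Icc (0:ℝ) 1,
      ({x ∈ ball y r | u x < l} \ {x ∈ ball y r | u x < k}).indicator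
        (fun x => ‖gradient u x‖ₑ) (x + t • (z - x)) := by
  have hmem : ∀ t ∈ Icc (0:ℝ) 1, x + t • (z - x) ∈ ball y r := fun t ht =>
    (convex_ball y r).add_smul_sub_mem hx hz ht
  have hdiff : ∀ w ∈ ball y r, HasFDerivAt u (fderiv ℝ u w) w := fun w hw =>
    ((hu.differentiableOn (by norm_num)).differentiableAt (isOpen_ball.mem_nhds hw)).hasFDerivAt
  have hcf : ContinuousOn (fderiv ℝ u) (ball y r) :=
    hu.continuousOn_fderiv_of_isOpen isOpen_ball le_rfl
  have key := dg_one_dim (fun t => u (x + t • (z - x)))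
    (fun t => fderiv ℝ u (x + t • (z - x)) (z - x)) ?_ ?_ k l hkl (by simpa using hxk)
    (by simpa using hzl)
  · refine key.trans ?_
    rw [← lintegral_const_mul' _ _ ENNReal.ofReal_ne_top]
    apply setLIntegral_mono' measurableSet_Icc
    intro t ht
    by_cases h : t ∈ {t : ℝ | k ≤ u (x + t • (z - x)) ∧ u (x + t • (z - x)) < l}
    · have h2 : x + t • (z - x) ∈ {x ∈ ball y r | u x < l} \ {x ∈ ball y r | u x < k} :=
        ⟨⟨hmem t ht, h.2⟩, fun h' => absurd h'.2 (not_lt.2 h.1)⟩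
      rw [indicator_of_mem h, indicator_of_mem h2, ← ofReal_norm, ← ofReal_norm,
        ← ENNReal.ofReal_mul' (norm_nonneg _)]
      apply ENNReal.ofReal_le_ofReal
      have hn : ‖gradient u (x + t • (z - x))‖ = ‖fderiv ℝ u (x + t • (z - x))‖ := by
        simp [gradient]
      rw [hn, mul_comm]
      refine (ContinuousLinearMap.le_opNorm _ _).trans ?_
      gcongr
      rw [← dist_eq_norm]
      have := dist_triangle_right z x y
      rw [mem_ball] at hx hz
      linarith
    · rw [indicator_of_notMem h]; exact zero_le
  · intro t ht
    have h1 : HasDerivAt (fun t : ℝ => x + t • (z - x)) (z - x) t := by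
      simpa using ((hasDerivAt_id t).smul_const (z - x)).const_add x
    exact (hdiff _ (hmem t ht)).comp_hasDerivAt t h1
  · have : ContinuousOn (fun t : ℝ => fderiv ℝ u (x + t • (z - x))) (Icc 0 1) :=
      hcf.comp (by fun_prop) hmem
    exact this.clm_apply continuousOn_const

/-- the De Giorgi–Poincaré lemma, with
`A_{m,r} = {x ∈ B_r(y) : u(x) < m}`. -/
theorem de_giorgi_poincare (n : ℕ) :
    ∃ γ > (0:ℝ),
      ∀ (y : EuclideanSpace ℝ (Fin n)) (r : ℝ), 0 < r →
        ∀ u : EuclideanSpace ℝ (Fin n) → ℝ,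
          ContDiffOn ℝ 1 u (Metric.ball y r) →
          IntegrableOn (fun x => ‖gradient u x‖) (Metric.ball y r) →
          ∀ k l : ℝ, k < l →
            (l - k) * (volume {x ∈ Metric.ball y r | u x < k}).toReal
                * (volume (Metric.ball y r \ {x ∈ Metric.ball y r | u x < l})).toReal
              ≤ γ * r ^ (n + 1)
                * ∫ x in {x ∈ Metric.ball y r | u x < l} \
                    {x ∈ Metric.ball y r | u x < k}, ‖gradient u x‖ := by
  have hV0 : 0 < (volume (ball (0 : EuclideanSpace ℝ (Fin n)) 1)).toReal :=
    ENNReal.toReal_pos (measure_ball_pos _ _ one_pos).ne' measure_ball_lt_top.ne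
  refine ⟨2 ^ (n + 1) * (volume (ball (0 : EuclideanSpace ℝ (Fin n)) 1)).toReal,
    by positivity, ?_⟩
  intro y r hr u hu hint k l hkl
  have hmeasA : ∀ m, MeasurableSet {x ∈ ball y r | u x < m} := fun m =>
    (hu.continuousOn.isOpen_inter_preimage isOpen_ball isOpen_Iio).measurableSet
  have hgrad : Measurable (gradient u) := by
    unfold gradient
    exact (InnerProductSpace.toDual ℝ _).symm.continuous.measurable.comp (measurable_fderiv ℝ u)
  set A := {x ∈ ball y r | u x < k} with hA
  set L := {x ∈ ball y r | u x < l} with hL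
  have hG : MeasurableSet (L \ A) := (hmeasA l).diff (hmeasA k)
  set g : EuclideanSpace ℝ (Fin n) → ENNReal :=
    (L \ A).indicator (fun x => ‖gradient u x‖ₑ) with hg
  have hgm : Measurable g := hgrad.enorm.indicator hG
  have hgi : ∫⁻ x, g x = ∫⁻ x in L \ A, ‖gradient u x‖ₑ := lintegral_indicator hG _
  have hAs : A ⊆ ball y r := sep_subset _ _
  have hfin : ∫⁻ x in L \ A, ‖gradient u x‖ₑ ≠ ⊤ := by
    have h1 : IntegrableOn (fun x => ‖gradient u x‖) (L \ A) :=
      hint.mono_set (diff_subset.trans (sep_subset _ _))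
    have := h1.2.ne
    simpa using this
  have main : ENNReal.ofReal (l - k) * volume A * volume (ball y r \ L) ≤
      ENNReal.ofReal (2 * r) * (2 ^ n * (∫⁻ x, g x) * volume (ball y r)) := by
    calc ENNReal.ofReal (l - k) * volume A * volume (ball y r \ L)
        = ∫⁻ x in A, ∫⁻ z in ball y r \ L, ENNReal.ofReal (l - k) := by
          simp only [setLIntegral_const]; ring
      _ ≤ ∫⁻ x in A, ∫⁻ z in ball y r \ L,
            ENNReal.ofReal (2 * r) * ∫⁻ t in Icc (0:ℝ) 1, g (x + t • (z - x)) := by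
          apply setLIntegral_mono' (hmeasA k)
          intro x hx
          apply setLIntegral_mono' (measurableSet_ball.diff (hmeasA l))
          intro z hz
          exact dg_line y r u hu k l hkl x z hx.1 hz.1 hx.2
            (not_lt.1 fun h => hz.2 ⟨hz.1, h⟩)
      _ ≤ ∫⁻ x in ball y r, ∫⁻ z in ball y r,
            ENNReal.ofReal (2 * r) * ∫⁻ t in Icc (0:ℝ) 1, g (x + t • (z - x)) := by
          refine (lintegral_mono_set hAs).trans (lintegral_mono fun x => ?_)
          exact lintegral_mono_set diff_subset
      _ = ENNReal.ofReal (2 * r) * ∫⁻ x in ball y r, ∫⁻ z in ball y r,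
            ∫⁻ t in Icc (0:ℝ) 1, g (x + t • (z - x)) := by
          simp_rw [lintegral_const_mul' _ _ (ENNReal.ofReal_ne_top (r := 2 * r))]
      _ ≤ _ := by gcongr; exact dg_triple g hgm _
  rw [integral_norm_eq_lintegral_enorm hgrad.aestronglyMeasurable]
  rw [hgi, Measure.addHaar_ball_of_pos _ _ hr, finrank_euclideanSpace_fin] at main
  have hV : volume (ball (0 : EuclideanSpace ℝ (Fin n)) 1) ≠ ⊤ := measure_ball_lt_top.ne
  have fin2 := ENNReal.toReal_mono (by finiteness) main
  simp only [ENNReal.toReal_mul, ENNReal.toReal_pow, ENNReal.toReal_ofNat] at fin2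
  rw [ENNReal.toReal_ofReal (by linarith), ENNReal.toReal_ofReal (by positivity),
    ENNReal.toReal_ofReal (by positivity)] at fin2
  refine fin2.trans (le_of_eq ?_)
  ring

end
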